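/- Let α ∈ (0,1) be irrational with unbounded partial quotients (a_k), and set ℓ_e := liminf_{k→∞} (Σ_{m=1,…,k, m even} a_m)/(Σ_{m=1}^{k} a_m) and ℓ_o := liminf_{k→∞} (Σ_{m=1,…,k, m odd} a_m)/(Σ_{m=1}^{k} a_m). If ℓ_e² + ℓ_o² > 0 and limsup_{k→∞} k/(Σ_{m=1}^{k} a_m) = 0, then (1/4)·max{ℓ_e, ℓ_o} ≤ limsup_{n→∞} [ n·D_n*(α) / Σ_{m=1}^{ord(n−1)+1} a_m ] ≤ 1/4. -/

import Mathlib

open Filter Finset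

noncomputable section

/-- The Gauss map `G(x) = {1/x}` (with `G(0) = 0`, since `0⁻¹ = 0` in Lean). -/
def gaussMap (x : ℝ) : ℝ := Int.fract x⁻¹

/-- `α_m = G^m(α)`. -/
def gaussIter (α : ℝ) (m : ℕ) : ℝ := gaussMap^[m] α

/-- The `h`-th partial quotient `a_h` of `α` (meaningful for `h ≥ 1`):
`a_h = ⌊(G^{h-1} α)⁻¹⌋`. -/
def pq (α : ℝ) (h : ℕ) : ℕ := ⌊(gaussIter α (h - 1))⁻¹⌋₊

/-- Denominators `q_n` of the convergents of `α`:
`q_0 = 1`, `q_1 = a_1`, `q_{n+2} = a_{n+2} q_{n+1} + q_n`. -/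
def qden (α : ℝ) : ℕ → ℕ
  | 0 => 1
  | 1 => pq α 1
  | (n + 2) => pq α (n + 2) * qden α (n + 1) + qden α n

/-- Numerators `p_n` of the convergents of `α`:
`p_0 = 0`, `p_1 = 1`, `p_{n+2} = a_{n+2} p_{n+1} + p_n`. -/
def pnum (α : ℝ) : ℕ → ℕ
  | 0 => 0
  | 1 => 1
  | (n + 2) => pq α (n + 2) * pnum α (n + 1) + pnum α n

/-- `f_n = (-1)^n (q_n α - p_n)`. -/
def fseq (α : ℝ) (n : ℕ) : ℝ := (-1) ^ n * ((qden α n : ℝ) * α - (pnum α n : ℝ))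

/-- `r_k = min {r ≥ 0 : ⌊r α⌋ = k}`. -/
def rmin (α : ℝ) (k : ℕ) : ℕ := sInf {r : ℕ | ⌊(r : ℝ) * α⌋ = (k : ℤ)}

/-- `t_k = #{r ≥ 0 : ⌊r α⌋ = k}`. -/
def tcount (α : ℝ) (k : ℕ) : ℕ := Set.ncard {r : ℕ | ⌊(r : ℝ) * α⌋ = (k : ℤ)}

/-- `(k_j)_{j ≥ 0}`: the increasing enumeration of `{k : t_k = a_1 + 1}`. -/
def kseq (α : ℝ) (j : ℕ) : ℕ := Nat.nth (fun k => tcount α k = pq α 1 + 1) j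

/-- The gaps `g_j = r_{k_j} - r_{k_{j-1}}` (for `j ≥ 1`). -/
def gseq (γ : ℝ) (j : ℕ) : ℕ := rmin γ (kseq γ j) - rmin γ (kseq γ (j - 1))

/-- `(j_h)_{h ≥ 0}`: the increasing enumeration of those `j ≥ 1` with
`g_j = q_2 + q_1`. -/
def jbig (γ : ℝ) (h : ℕ) : ℕ :=
  Nat.nth (fun j => 1 ≤ j ∧ gseq γ j = qden γ 2 + qden γ 1) h

/-- `ᾱ_1 = G(α)/(1 - G(α))`. -/
def abar (α : ℝ) : ℝ := gaussIter α 1 / (1 - gaussIter α 1)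

/-- The Ostrowski representation `r = ∑_{h=0}^N c_h q_h` with `0 ≤ c_h ≤ a_{h+1}`,
`c_{h-1} = 0` whenever `c_h = a_{h+1}`, and `c_N > 0`; `N = ord r`. -/
def IsOstrowski (α : ℝ) (r N : ℕ) (c : ℕ → ℕ) : Prop :=
  r = ∑ h ∈ Finset.range (N + 1), c h * qden α h ∧
  (∀ h, c h ≤ pq α (h + 1)) ∧
  (∀ h, c (h + 1) = pq α (h + 2) → c h = 0) ∧
  0 < c N ∧ ∀ h, N < h → c h = 0

/-- The order `ord r` of a positive integer `r`. -/
def ordOst (α : ℝ) (r : ℕ) : ℕ := sInf {N | ∃ c, IsOstrowski α r N c}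

/-- `s(y) = 2 χ_{[0,1/2)}({y}) - 1`. -/
def sfun (y : ℝ) : ℝ := if Int.fract y < 1 / 2 then 1 else -1

/-- `S_n(α, β) = ∑_{r=0}^n s({r α + β})`. -/
def Sgen (α β : ℝ) (n : ℕ) : ℝ := ∑ r ∈ Finset.range (n + 1), sfun ((r : ℝ) * α + β)

/-- `S_n(α) = S_n(α, 0)`. -/
def Ssum (α : ℝ) (n : ℕ) : ℝ := Sgen α 0 n

/-- `max_{0 ≤ n ≤ r} S_n(α)`. -/
def maxS (α : ℝ) (r : ℕ) : ℝ := sSup (Ssum α '' Set.Iic r)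

/-- `min_{0 ≤ n ≤ r} S_n(α)`. -/
def minS (α : ℝ) (r : ℕ) : ℝ := sInf (Ssum α '' Set.Iic r)

/-- `d_n(α, β) = ∑_{r=0}^{n-1} χ_{[0,β)}({r α}) - β n`. -/
def ddisc (α β : ℝ) (n : ℕ) : ℝ :=
  (∑ r ∈ Finset.range n, if Int.fract ((r : ℝ) * α) < β then (1 : ℝ) else 0) - β * n

/-- `j(r) = max {j + sgn R₁ - 1, 0}` from the decomposition `r = r_{k_j} + R₁ q₁ + R₀`. -/
def jfun (j R1 : ℕ) : ℕ := if R1 = 0 then j - 1 else j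

/-- `i(r) = k_j - j + max {R₁ - 1, 0}` from the decomposition `r = r_{k_j} + R₁ q₁ + R₀`. -/
def ifun (α : ℝ) (j R1 : ℕ) : ℕ := kseq α j - j + (R1 - 1)

/-- `S̃(r)` from the decomposition `r = r_{k_j} + R₁ q₁ + R₀`. -/
def Stil (α : ℝ) (r R1 R0 : ℕ) : ℝ :=
  if R0 = 0 then (if R1 = 0 then sfun ((r : ℝ) * α) else 0)
  else if R1 = 0 then ∑ i ∈ Finset.Icc (r - R0) r, sfun ((i : ℝ) * α)
  else ∑ i ∈ Finset.Icc (r - R0 + 1) r, sfun ((i : ℝ) * α)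

/-- `sup_{β ∈ (0,1)} |d_n(α, β)| = n D_n^*(α)`. -/
def nDsup (α : ℝ) (n : ℕ) : ℝ := sSup ((fun β => |ddisc α β n|) '' Set.Ioo (0 : ℝ) 1)

/-- The discrepancy `D_n^*(α) = sup_{β ∈ (0,1)} |d_n(α, β)| / n`. -/
def Dstar (α : ℝ) (n : ℕ) : ℝ :=
  sSup ((fun β => |ddisc α β n| / (n : ℝ)) '' Set.Ioo (0 : ℝ) 1)

/-!
The function `d_n(α, β)` is the difference of two values of the sawtooth sum
`S_n(y) = ∑_{r < n} ({rα + y} - 1/2)`, namely those at `y = -β` and `y = 0`.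

The Ostrowski expansion cuts `S_n` into blocks of `c q_m` terms. Within a block, `q_m` consecutive
points are nearly equidistributed, so the block is, up to `O(1)`, a sawtooth sum of `c` terms along
the rotation by `θ = q_m |q_m α - p_m| ≈ 1 / a_{m+1}`. Comparing this sum with the integral of the
sawtooth, whose primitive oscillates by `1/8`, bounds the block by `a_{m+1} / 8 + O(1)`. The two
sawtooth sums in `d_n` then give `1/4` of the sum of the partial quotients, with an error
proportional to the number of blocks.

Conversely, a block of `c ≈ a_{m+1} / 2` steps started near `0` only visits the negative half of the
sawtooth and attains `-a_{m+1} / 8`. The direction of the steps alternates with the parity of `m`,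
so such blocks reinforce each other when only one parity is used. At `β = {nα}` the symmetry of the
orbit makes the two sawtooth sums in `d_n` opposite up to `O(1)`, which doubles the effect.
-/

/-! ### The sawtooth function and its sums along rotations -/

/-- The centred fractional part `{x} - 1/2`. At integers it takes the value `-1/2`, not `0`, so it
is odd only away from the integers. -/
def sawtooth (x : ℝ) : ℝ := Int.fract x - 1 / 2

/-- The Birkhoff sum of the sawtooth over the first `n` points of the orbit of `y` under the
rotation by `α`; the discrepancy function `ddisc` is a difference of two such sums. -/
def sawtoothSum (α : ℝ) (n : ℕ) (y : ℝ) : ℝ := ∑ r ∈ range n, sawtooth (r * α + y)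

theorem sawtooth_add_intCast (x : ℝ) (k : ℤ) : sawtooth (x + k) = sawtooth x := by
  simp [sawtooth]

theorem sawtooth_zero : sawtooth 0 = -(1 / 2) := by simp [sawtooth]

theorem abs_sawtooth_le (x : ℝ) : |sawtooth x| ≤ 1 / 2 := by
  rw [sawtooth, abs_le]
  constructor <;> linarith [Int.fract_nonneg x, Int.fract_lt_one x]

theorem sawtooth_eq_of_mem_Ico {x : ℝ} (hx : x ∈ Set.Ico 0 1) : sawtooth x = x - 1 / 2 := by
  rw [sawtooth, Int.fract_eq_self.2 hx]

theorem sawtooth_le_of_nonneg {x : ℝ} (hx : 0 ≤ x) : sawtooth x ≤ x - 1 / 2 := by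
  have hfloor : (0 : ℝ) ≤ ⌊x⌋ := mod_cast Int.floor_nonneg.2 hx
  linarith [Int.self_sub_floor x, show sawtooth x = Int.fract x - 1 / 2 from rfl]

theorem sawtooth_sub_le_sub {x y : ℝ} (h : x ≤ y) : sawtooth y - sawtooth x ≤ y - x := by
  have hfloor : (⌊x⌋ : ℝ) ≤ ⌊y⌋ := mod_cast Int.floor_mono h
  rw [sawtooth, sawtooth, ← Int.self_sub_floor, ← Int.self_sub_floor]
  linarith

theorem sawtooth_neg_of_irrational {x : ℝ} (hx : Irrational x) : sawtooth (-x) = -sawtooth x := by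
  have hfract : Int.fract x ≠ 0 := fun h => by
    obtain ⟨k, hk⟩ := Int.fract_eq_zero_iff.1 h
    exact hx.ne_int k hk.symm
  rw [sawtooth, sawtooth, Int.fract_neg hfract]
  ring

theorem indicator_fract_lt_sub_eq {β : ℝ} (h0 : 0 ≤ β) (h1 : β ≤ 1) (x : ℝ) :
    (if Int.fract x < β then (1 : ℝ) else 0) - β = sawtooth (x - β) - sawtooth x := by
  have hx := Int.floor_add_fract x
  have hx0 := Int.fract_nonneg x
  have hx1 := Int.fract_lt_one x
  rw [sawtooth, sawtooth, ← Int.self_sub_floor (x - β)]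
  split_ifs with h
  · have hfloor : ⌊x - β⌋ = ⌊x⌋ - 1 := by
      rw [Int.floor_eq_iff]; push_cast; constructor <;> linarith
    rw [hfloor]; push_cast; linarith
  · have hfloor : ⌊x - β⌋ = ⌊x⌋ := by
      rw [Int.floor_eq_iff]; constructor <;> linarith
    rw [hfloor]; linarith

theorem sawtoothSum_one (α y : ℝ) : sawtoothSum α 1 y = sawtooth y := by simp [sawtoothSum]

theorem sawtoothSum_add (α : ℝ) (m n : ℕ) (y : ℝ) :
    sawtoothSum α (m + n) y = sawtoothSum α m y + sawtoothSum α n (y + m * α) := by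
  simp only [sawtoothSum, sum_range_add]
  congr! 3
  push_cast
  ring

theorem sawtoothSum_succ (α : ℝ) (n : ℕ) (y : ℝ) :
    sawtoothSum α (n + 1) y = sawtoothSum α n y + sawtooth (y + n * α) := by
  rw [sawtoothSum_add, sawtoothSum_one]

theorem sawtoothSum_succ' (α : ℝ) (n : ℕ) (y : ℝ) :
    sawtoothSum α (n + 1) y = sawtooth y + sawtoothSum α n (y + α) := by
  rw [add_comm, sawtoothSum_add, sawtoothSum_one, Nat.cast_one, one_mul]

theorem sawtoothSum_add_intCast (α : ℝ) (n : ℕ) (y : ℝ) (k : ℤ) :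
    sawtoothSum α n (y + k) = sawtoothSum α n y := by
  simp only [sawtoothSum, ← add_assoc, sawtooth_add_intCast]

theorem sawtoothSum_reflect (α : ℝ) (n : ℕ) (y : ℝ) :
    sawtoothSum α n y = sawtoothSum (-α) n (y + (n - 1) * α) := by
  rw [sawtoothSum, ← sum_range_reflect]
  refine sum_congr rfl fun r hr => ?_
  have hcast : ((n - 1 - r : ℕ) : ℝ) = n - 1 - r := by
    have := mem_range.1 hr
    rw [Nat.cast_sub (by omega), Nat.cast_pred (by omega)]
  rw [hcast]
  congr 1
  ring

theorem sawtoothSum_mul (α : ℝ) (c q : ℕ) (p : ℤ) (y : ℝ) :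
    sawtoothSum α (c * q) y = ∑ b ∈ range c, sawtoothSum α q (y + b * (q * α - p)) := by
  induction c with
  | zero => simp [sawtoothSum]
  | succ c ih =>
    rw [Nat.succ_mul, sawtoothSum_add, ih, sum_range_succ,
      ← sawtoothSum_add_intCast α q (y + c * (q * α - p)) (c * p)]
    congr 2
    push_cast
    ring

theorem abs_sawtoothSum_le (α : ℝ) (n : ℕ) (y : ℝ) : |sawtoothSum α n y| ≤ n / 2 :=
  calc |sawtoothSum α n y| ≤ ∑ r ∈ range n, |sawtooth (r * α + y)| := abs_sum_le_sum_abs _ _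
    _ ≤ ∑ _r ∈ range n, 1 / 2 := sum_le_sum fun _ _ => abs_sawtooth_le _
    _ = n / 2 := by simp [div_eq_mul_inv]

theorem sawtoothSum_le_of_nonneg {θ x : ℝ} (hθ : 0 ≤ θ) (hx : 0 ≤ x) (c : ℕ) :
    sawtoothSum θ c x ≤ c * (x - 1 / 2) + θ * (c * (c - 1) / 2) := by
  induction c with
  | zero => simp [sawtoothSum]
  | succ c ih =>
    have hlast := sawtooth_le_of_nonneg (x := x + c * θ) (by positivity)
    rw [sawtoothSum_succ]
    push_cast
    linarith

theorem sawtoothSum_neg_neg {α : ℝ} (hα : Irrational α) (n : ℕ) :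
    sawtoothSum (-α) n (-α) = -sawtoothSum α n α := by
  rw [sawtoothSum, sawtoothSum, ← sum_neg_distrib]
  refine sum_congr rfl fun r _ => ?_
  have hirr : Irrational (r * α + α) := by
    simpa [add_mul] using hα.natCast_mul r.succ_ne_zero
  rw [← sawtooth_neg_of_irrational hirr]
  congr 1
  ring

-- Reversing the orbit replaces the rotation `α` started at `-nα` by `-α` started at `-α`, where the
-- sawtooth is odd.
theorem sawtoothSum_neg_mul_add {α : ℝ} (hα : Irrational α) (n : ℕ) :
    sawtoothSum α n (-(n * α)) + sawtoothSum α n 0 = -Int.fract (n * α) := by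
  have hreflect : sawtoothSum α n (-(n * α)) = sawtoothSum (-α) n (-α) := by
    rw [sawtoothSum_reflect]; congr 1; ring
  have hshift := (sawtoothSum_succ α n 0).symm.trans (sawtoothSum_succ' α n 0)
  rw [zero_add, zero_add, sawtooth_zero, sawtooth] at hshift
  rw [hreflect, sawtoothSum_neg_neg hα]
  linarith

theorem abs_sawtoothSum_neg_zero_le {α : ℝ} (hα : Irrational α) (n : ℕ) :
    |sawtoothSum (-α) n 0| ≤ |sawtoothSum α n 0| + 1 := by
  cases n with
  | zero => simp [sawtoothSum]
  | succ n =>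
    have hneg : sawtoothSum (-α) (n + 1) 0 = -(sawtoothSum α (n + 1) 0 + 1) := by
      rw [sawtoothSum_succ', sawtoothSum_succ', zero_add, zero_add, sawtoothSum_neg_neg hα,
        sawtooth_zero]
      ring
    rw [hneg, abs_neg]
    simpa using abs_add_le (sawtoothSum α (n + 1) 0) 1

theorem sum_range_mul_add_of_periodic {M : Type*} [AddCommMonoid M] {f : ℤ → M} {q : ℕ}
    (hf : Function.Periodic f q) (hq : 0 < q) {p : ℤ} (hpq : IsCoprime p q) (m : ℤ) :
    ∑ s ∈ range q, f (s * p + m) = ∑ s ∈ range q, f s := by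
  have hcast : ∀ s : ℕ, (((s * p + m) % q).toNat : ℤ) = (s * p + m) % q := fun s =>
    Int.toNat_of_nonneg (Int.emod_nonneg _ (by omega))
  have hmaps : Set.MapsTo (fun s : ℕ => ((s * p + m) % q).toNat) (range q) (range q) := by
    intro s _
    have := Int.emod_lt_of_pos (s * p + m) (Int.natCast_pos.2 hq)
    have := hcast s
    simp only [coe_range, Set.mem_Iio]
    omega
  have hinj : Set.InjOn (fun s : ℕ => ((s * p + m) % q).toNat) (range q) := by
    intro s hs t ht hst
    simp only [coe_range, Set.mem_Iio] at hs ht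
    have hmod : (s * p + m) % q = (t * p + m) % q := by
      rw [← hcast s, ← hcast t]; exact congrArg Nat.cast hst
    have hdvd : (q : ℤ) ∣ (t - s) * p := by
      have := Int.ModEq.dvd hmod
      rwa [add_sub_add_right_eq_sub, ← sub_mul] at this
    have := Int.eq_zero_of_abs_lt_dvd (hpq.symm.dvd_of_dvd_mul_right hdvd)
      (abs_lt.2 ⟨by omega, by omega⟩)
    omega
  refine sum_nbij _ hmaps hinj (surjOn_of_injOn_of_card_le _ hmaps hinj le_rfl) fun s _ => ?_
  rw [hcast, Int.emod_def, mul_comm (q : ℤ)]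
  exact (hf.sub_zsmul_eq _).symm

theorem sum_range_sawtooth_mul_div_add {q : ℕ} (hq : 0 < q) {p : ℤ} (hpq : IsCoprime p q) (x : ℝ) :
    ∑ s ∈ range q, sawtooth (s * (p / q) + x) = sawtooth (q * x) := by
  have hq' : (0 : ℝ) < q := mod_cast hq
  set t := Int.fract (q * x)
  let f : ℤ → ℝ := fun k => sawtooth ((k + t) / q)
  have hf : Function.Periodic f q := fun k => by
    have : ((k + q : ℤ) + t) / q = (k + t) / q + (1 : ℤ) := by push_cast; field_simp; ring
    simp only [f, this, sawtooth_add_intCast]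
  calc ∑ s ∈ range q, sawtooth (s * (p / q) + x)
      = ∑ s ∈ range q, f (s * p + ⌊q * x⌋) := by
        refine sum_congr rfl fun s _ => congrArg sawtooth ?_
        rw [eq_div_iff hq'.ne']
        push_cast
        rw [add_assoc, Int.floor_add_fract]
        field_simp
    _ = ∑ s ∈ range q, f s := sum_range_mul_add_of_periodic hf hq hpq _
    _ = ∑ s ∈ range q, ((s + t) / q - 1 / 2) := by
        refine sum_congr rfl fun s hs => sawtooth_eq_of_mem_Ico ⟨?_, ?_⟩
        · have := Int.fract_nonneg (q * x); push_cast; positivity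
        · have hs' : (s : ℝ) + 1 ≤ q := mod_cast mem_range.1 hs
          rw [div_lt_one hq']; push_cast; linarith [Int.fract_lt_one (q * x)]
    _ = sawtooth (q * x) := by
        have hgauss : (∑ s ∈ range q, (s : ℝ)) * 2 = q * (q - 1) := by
          have := congrArg (Nat.cast : ℕ → ℝ) (sum_range_id_mul_two q)
          push_cast [Nat.cast_pred hq] at this
          exact this
        rw [sum_sub_distrib, ← sum_div, sum_add_distrib]
        simp only [sum_const, card_range, nsmul_eq_mul]
        rw [sawtooth]
        field_simp
        linarith

/-! ### Renormalization -/

theorem sawtoothSum_le_sawtooth_add {α : ℝ} {q : ℕ} (hq : 0 < q) {p : ℤ} (hpq : IsCoprime p q)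
    (hδ : 0 ≤ q * α - p) (x : ℝ) :
    sawtoothSum α q x ≤ sawtooth (q * x) + q * (q * α - p) := by
  have hq' : (0 : ℝ) < q := mod_cast hq
  have hterm : ∀ s ∈ range q,
      sawtooth (s * α + x) ≤ sawtooth (s * (p / q) + x) + (q * α - p) := fun s hs => by
    have hs' : (s : ℝ) ≤ q := mod_cast (mem_range.1 hs).le
    have hsub : s * α + x - (s * (p / q) + x) = s / q * (q * α - p) := by field_simp; ring
    have hnonneg : 0 ≤ s / q * (q * α - p) := by positivity
    have hle : s / q * (q * α - p) ≤ q * α - p :=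
      mul_le_of_le_one_left hδ ((div_le_one hq').2 hs')
    linarith [sawtooth_sub_le_sub (x := s * (p / q) + x) (y := s * α + x) (by linarith)]
  have hsum := sum_le_sum hterm
  rwa [sum_add_distrib, sum_const, card_range, nsmul_eq_mul,
    sum_range_sawtooth_mul_div_add hq hpq] at hsum

theorem sawtooth_sub_le_sawtoothSum {α : ℝ} {q : ℕ} (hq : 0 < q) {p : ℤ} (hpq : IsCoprime p q)
    (hδ : 0 ≤ q * α - p) (x : ℝ) :
    sawtooth (q * (x + (q * α - p))) - q * (q * α - p) ≤ sawtoothSum α q x := by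
  have hq' : (0 : ℝ) < q := mod_cast hq
  have hterm : ∀ s ∈ range q,
      sawtooth (s * (p / q) + (x + (q * α - p))) - (q * α - p) ≤ sawtooth (s * α + x) :=
    fun s hs => by
    have hs' : (s : ℝ) ≤ q := mod_cast (mem_range.1 hs).le
    have hsub : s * (p / q) + (x + (q * α - p)) - (s * α + x) = (1 - s / q) * (q * α - p) := by
      field_simp; ring
    have hnonneg : 0 ≤ s / q * (q * α - p) := by positivity
    have hle : s / q * (q * α - p) ≤ q * α - p :=
      mul_le_of_le_one_left hδ ((div_le_one hq').2 hs')
    linarith [sawtooth_sub_le_sub (x := s * α + x) (y := s * (p / q) + (x + (q * α - p)))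
      (by linarith)]
  have hsum := sum_le_sum hterm
  rwa [sum_sub_distrib, sum_const, card_range, nsmul_eq_mul,
    sum_range_sawtooth_mul_div_add hq hpq] at hsum

theorem abs_sawtoothSum_mul_sub_le {α : ℝ} {q : ℕ} (hq : 0 < q) {p : ℤ} (hpq : IsCoprime p q)
    {θ : ℝ} (hθ : θ = q * (q * α - p)) (hθ0 : 0 ≤ θ) (c : ℕ) (y : ℝ) :
    |sawtoothSum α (c * q) y - sawtoothSum θ c (q * y)| ≤ c * θ + 1 := by
  have hδ : 0 ≤ q * α - p := nonneg_of_mul_nonneg_right (hθ ▸ hθ0) (mod_cast hq)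
  have hupper : ∀ b ∈ range c,
      sawtoothSum α q (y + b * (q * α - p)) ≤ sawtooth (b * θ + q * y) + θ := fun b _ => by
    have := sawtoothSum_le_sawtooth_add hq hpq hδ (y + b * (q * α - p))
    rwa [show q * (y + b * (q * α - p)) = b * θ + q * y by rw [hθ]; ring, ← hθ] at this
  have hlower : ∀ b ∈ range c,
      sawtooth (b * θ + (q * y + θ)) - θ ≤ sawtoothSum α q (y + b * (q * α - p)) :=
    fun b _ => by
    have := sawtooth_sub_le_sawtoothSum hq hpq hδ (y + b * (q * α - p))
    rwa [show q * (y + b * (q * α - p) + (q * α - p)) = b * θ + (q * y + θ) by rw [hθ]; ring,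
      ← hθ] at this
  have hsum_upper : sawtoothSum α (c * q) y ≤ sawtoothSum θ c (q * y) + c * θ := by
    rw [sawtoothSum_mul α c q p]
    simpa [sawtoothSum, sum_add_distrib] using sum_le_sum hupper
  have hsum_lower : sawtoothSum θ c (q * y + θ) - c * θ ≤ sawtoothSum α (c * q) y := by
    rw [sawtoothSum_mul α c q p]
    simpa [sawtoothSum, sum_sub_distrib] using sum_le_sum hlower
  have hshift := (sawtoothSum_succ θ c (q * y)).symm.trans (sawtoothSum_succ' θ c (q * y))
  have hfirst := abs_le.1 (abs_sawtooth_le (q * y))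
  have hlast := abs_le.1 (abs_sawtooth_le (q * y + c * θ))
  rw [abs_le]
  constructor <;> linarith

-- `sawtooth ^ 2 / 2` is a continuous primitive of `sawtooth`.
theorem mul_sawtooth_sub_mem_Icc {θ : ℝ} (h0 : 0 ≤ θ) (h1 : θ ≤ 1) (x : ℝ) :
    θ * sawtooth x - (sawtooth (x + θ) ^ 2 / 2 - sawtooth x ^ 2 / 2) ∈
      Set.Icc (-(θ ^ 2 / 2)) (θ * (⌊x + θ⌋ - ⌊x⌋)) := by
  have hfract0 := Int.fract_nonneg x
  have hfract1 := Int.fract_lt_one x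
  have hx := Int.floor_add_fract x
  rcases lt_or_ge (Int.fract x + θ) 1 with h | h
  · have hfloor : ⌊x + θ⌋ = ⌊x⌋ := by
      rw [Int.floor_eq_iff]; constructor <;> linarith
    have hsaw : sawtooth (x + θ) = sawtooth x + θ := by
      rw [sawtooth, sawtooth, ← Int.self_sub_floor (x + θ), hfloor]; linarith
    rw [hsaw, hfloor]
    constructor <;> nlinarith
  · have hfloor : ⌊x + θ⌋ = ⌊x⌋ + 1 := by
      rw [Int.floor_eq_iff]; push_cast; constructor <;> linarith
    have hsaw : sawtooth (x + θ) = sawtooth x + θ - 1 := by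
      rw [sawtooth, sawtooth, ← Int.self_sub_floor (x + θ), hfloor]; push_cast; linarith
    rw [hsaw, hfloor, sawtooth]
    push_cast
    constructor <;> nlinarith

theorem mul_sawtoothSum_sub_mem_Icc {θ : ℝ} (h0 : 0 ≤ θ) (h1 : θ ≤ 1) (c : ℕ) (x : ℝ) :
    θ * sawtoothSum θ c x - (sawtooth (x + c * θ) ^ 2 / 2 - sawtooth x ^ 2 / 2) ∈
      Set.Icc (-(c * (θ ^ 2 / 2))) (θ * (⌊x + c * θ⌋ - ⌊x⌋)) := by
  induction c with
  | zero => simp [sawtoothSum]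
  | succ c ih =>
    have hstep := mul_sawtooth_sub_mem_Icc h0 h1 (x + c * θ)
    rw [add_assoc, ← add_one_mul, ← Nat.cast_succ] at hstep
    rw [sawtoothSum_succ]
    obtain ⟨ihl, ihu⟩ := ih
    obtain ⟨hl, hu⟩ := hstep
    rw [Nat.succ_eq_add_one] at hl hu
    constructor
    · push_cast at hl ⊢; linarith
    · linarith

theorem mul_abs_sawtoothSum_le {θ : ℝ} (h0 : 0 ≤ θ) (h1 : θ ≤ 1) (c : ℕ) (x : ℝ) :
    θ * |sawtoothSum θ c x| ≤ 1 / 8 + θ * (c * θ + 1) := by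
  obtain ⟨hlower, hupper⟩ := mul_sawtoothSum_sub_mem_Icc h0 h1 c x
  have hsq : ∀ z, sawtooth z ^ 2 ≤ 1 / 4 := fun z => by
    have := sq_le_sq' (abs_le.1 (abs_sawtooth_le z)).1 (abs_le.1 (abs_sawtooth_le z)).2
    linarith
  have hfloor : (⌊x + c * θ⌋ - ⌊x⌋ : ℝ) ≤ c * θ + 1 := by
    linarith [Int.floor_le (x + c * θ), Int.lt_floor_add_one x]
  have hjump := mul_le_mul_of_nonneg_left hfloor h0
  have : 0 ≤ c * θ ^ 2 := by positivity
  have hx := hsq x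
  have hxc := hsq (x + c * θ)
  have := sq_nonneg (sawtooth x)
  have := sq_nonneg (sawtooth (x + c * θ))
  rw [← abs_of_nonneg h0, ← abs_mul, abs_of_nonneg h0, abs_le]
  constructor <;> linarith

theorem abs_sawtoothSum_mul_le {α : ℝ} {q : ℕ} (hq : 0 < q) {p : ℤ} (hpq : IsCoprime p q)
    {θ : ℝ} (hθ : θ = q * (q * α - p)) (h0 : 0 < θ) (h1 : θ ≤ 1) (c : ℕ) (y : ℝ) :
    |sawtoothSum α (c * q) y| ≤ 1 / (8 * θ) + 2 * (c * θ + 1) := by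
  have hrenorm := abs_sawtoothSum_mul_sub_le hq hpq hθ h0.le c y
  have hsmall : |sawtoothSum θ c (q * y)| ≤ 1 / (8 * θ) + (c * θ + 1) := by
    refine le_of_mul_le_mul_left ((mul_abs_sawtoothSum_le h0.le h1 c _).trans_eq ?_) h0
    field_simp
  linarith [abs_sub_abs_le_abs_sub (sawtoothSum α (c * q) y) (sawtoothSum θ c (q * y))]

theorem sawtoothSum_mul_le_of_nonneg {α : ℝ} {q : ℕ} (hq : 0 < q) {p : ℤ} (hpq : IsCoprime p q)
    {θ : ℝ} (hθ : θ = q * (q * α - p)) (hθ0 : 0 ≤ θ) (c : ℕ) {y : ℝ} (hy : 0 ≤ y) :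
    sawtoothSum α (c * q) y ≤ c * (q * y - 1 / 2) + θ * (c * (c - 1) / 2) + (c * θ + 1) := by
  have hrenorm := (abs_le.1 (abs_sawtoothSum_mul_sub_le hq hpq hθ hθ0 c y)).2
  linarith [sawtoothSum_le_of_nonneg hθ0 (by positivity : 0 ≤ q * y) c]

/-! ### Continued fractions -/

section ContinuedFraction

variable {α : ℝ}

theorem gaussIter_succ (α : ℝ) (m : ℕ) :
    gaussIter α (m + 1) = Int.fract (gaussIter α m)⁻¹ := by
  rw [gaussIter, Function.iterate_succ_apply', ← gaussIter, gaussMap]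

theorem irrational_gaussIter (hirr : Irrational α) (m : ℕ) : Irrational (gaussIter α m) := by
  induction m with
  | zero => exact hirr
  | succ m ih =>
    rw [gaussIter_succ, ← Int.self_sub_floor]
    exact ih.inv.sub_intCast _

theorem gaussIter_pos (hirr : Irrational α) (h0 : 0 < α) (m : ℕ) : 0 < gaussIter α m := by
  cases m with
  | zero => exact h0
  | succ m =>
    refine (irrational_gaussIter hirr (m + 1)).ne_zero.symm.lt_of_le ?_
    exact gaussIter_succ α m ▸ Int.fract_nonneg _

theorem gaussIter_lt_one (h1 : α < 1) (m : ℕ) : gaussIter α m < 1 := by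
  cases m with
  | zero => exact h1
  | succ m => exact gaussIter_succ α m ▸ Int.fract_lt_one _

theorem one_le_pq (hirr : Irrational α) (h0 : 0 < α) (h1 : α < 1) (m : ℕ) :
    1 ≤ pq α (m + 1) := by
  refine Nat.le_floor ?_
  rw [Nat.cast_one]
  exact (one_le_inv₀ (gaussIter_pos hirr h0 m)).2 (gaussIter_lt_one h1 m).le

theorem gaussIter_succ_mul (hirr : Irrational α) (h0 : 0 < α) (m : ℕ) :
    gaussIter α (m + 1) * gaussIter α m = 1 - pq α (m + 1) * gaussIter α m := by
  have hpos := gaussIter_pos hirr h0 m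
  rw [gaussIter_succ, ← Int.self_sub_floor, pq, Nat.add_sub_cancel,
    natCast_floor_eq_intCast_floor (inv_pos.2 hpos).le, sub_mul, inv_mul_cancel₀ hpos.ne']

theorem fseq_zero (α : ℝ) : fseq α 0 = α := by simp [fseq, qden, pnum]

theorem fseq_one (α : ℝ) : fseq α 1 = 1 - pq α 1 * α := by simp [fseq, qden, pnum]

theorem fseq_add_two (α : ℝ) (m : ℕ) :
    fseq α (m + 2) = fseq α m - pq α (m + 2) * fseq α (m + 1) := by
  simp only [fseq, qden, pnum]
  push_cast
  ring

theorem fseq_succ (hirr : Irrational α) (h0 : 0 < α) (m : ℕ) :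
    fseq α (m + 1) = gaussIter α (m + 1) * fseq α m := by
  induction m with
  | zero =>
    rw [fseq_zero, fseq_one]
    exact (gaussIter_succ_mul hirr h0 0).symm
  | succ m ih =>
    rw [fseq_add_two, ih]
    linear_combination (-fseq α m) * gaussIter_succ_mul hirr h0 (m + 1)

theorem fseq_pos (hirr : Irrational α) (h0 : 0 < α) (m : ℕ) : 0 < fseq α m := by
  induction m with
  | zero => rwa [fseq_zero]
  | succ m ih =>
    rw [fseq_succ hirr h0]
    exact mul_pos (gaussIter_pos hirr h0 _) ih

theorem fseq_succ_le (hirr : Irrational α) (h0 : 0 < α) (m : ℕ) : fseq α (m + 1) ≤ fseq α m := by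
  have hlt : gaussIter α (m + 1) < 1 := gaussIter_succ α m ▸ Int.fract_lt_one _
  rw [fseq_succ hirr h0]
  exact mul_le_of_le_one_left (fseq_pos hirr h0 m).le hlt.le

theorem antitone_fseq (hirr : Irrational α) (h0 : 0 < α) : Antitone (fseq α) :=
  antitone_nat_of_succ_le (fseq_succ_le hirr h0)

theorem add_mul_fseq_succ_le (hirr : Irrational α) (h0 : 0 < α) {m c : ℕ} {y : ℝ}
    (hc : c ≤ pq α (m + 2)) (hy : y ≤ fseq α (m + 2)) : y + c * fseq α (m + 1) ≤ fseq α m := by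
  have hf := (fseq_pos hirr h0 (m + 1)).le
  have hmul : c * fseq α (m + 1) ≤ pq α (m + 2) * fseq α (m + 1) := by gcongr
  linarith [fseq_add_two α m]

theorem qden_succ_mul_fseq_add (α : ℝ) (m : ℕ) :
    qden α (m + 1) * fseq α m + qden α m * fseq α (m + 1) = 1 := by
  induction m with
  | zero => simp [fseq_zero, fseq_one, qden]
  | succ m ih =>
    rw [fseq_add_two, qden]
    push_cast
    linear_combination ih

theorem qden_mul_pnum_succ_sub (α : ℝ) (m : ℕ) :
    (qden α m : ℤ) * pnum α (m + 1) - qden α (m + 1) * pnum α m = (-1) ^ m := by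
  induction m with
  | zero => simp [qden, pnum]
  | succ m ih =>
    rw [qden, pnum, pow_succ, ← ih]
    push_cast
    ring

theorem isCoprime_pnum_qden (α : ℝ) (m : ℕ) :
    IsCoprime ((-1) ^ m * pnum α m : ℤ) (qden α m) := by
  have hsq : ((-1 : ℤ) ^ m) * (-1) ^ m = 1 := by rw [← mul_pow]; simp
  refine ⟨-qden α (m + 1), (-1) ^ m * pnum α (m + 1), ?_⟩
  linear_combination ((-1) ^ m) * qden_mul_pnum_succ_sub α m + hsq

theorem qden_mul_neg_one_pow_mul_sub (α : ℝ) (m : ℕ) :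
    qden α m * ((-1) ^ m * α) - ((-1) ^ m * pnum α m : ℤ) = fseq α m := by
  rw [fseq]
  push_cast
  ring

theorem pq_mul_qden_le (α : ℝ) (m : ℕ) : pq α (m + 1) * qden α m ≤ qden α (m + 1) := by
  cases m with
  | zero => simp [qden]
  | succ m => exact Nat.le_add_right _ _

theorem qden_pos (hirr : Irrational α) (h0 : 0 < α) (h1 : α < 1) (m : ℕ) : 0 < qden α m := by
  induction m with
  | zero => exact Nat.one_pos
  | succ m ih => exact (Nat.mul_pos (one_le_pq hirr h0 h1 m) ih).trans_le (pq_mul_qden_le α m)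

theorem qden_le_succ (hirr : Irrational α) (h0 : 0 < α) (h1 : α < 1) (m : ℕ) :
    qden α m ≤ qden α (m + 1) :=
  (Nat.le_mul_of_pos_left _ (one_le_pq hirr h0 h1 m)).trans (pq_mul_qden_le α m)

theorem qden_succ_le (hirr : Irrational α) (h0 : 0 < α) (h1 : α < 1) (m : ℕ) :
    qden α (m + 1) ≤ (pq α (m + 1) + 1) * qden α m := by
  cases m with
  | zero => simp [qden]
  | succ m =>
    rw [qden, add_mul, one_mul]
    exact Nat.add_le_add_left (qden_le_succ hirr h0 h1 m) _

theorem le_qden (hirr : Irrational α) (h0 : 0 < α) (h1 : α < 1) (m : ℕ) : m ≤ qden α m := by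
  induction m using Nat.twoStepInduction with
  | zero => exact Nat.zero_le _
  | one => exact one_le_pq hirr h0 h1 0
  | more m _ ih =>
    have hmul := Nat.le_mul_of_pos_left (qden α (m + 1)) (one_le_pq hirr h0 h1 (m + 1))
    rw [qden]
    linarith [qden_pos hirr h0 h1 m]

theorem pq_mul_qden_mul_fseq_le_one (hirr : Irrational α) (h0 : 0 < α) (m : ℕ) :
    pq α (m + 1) * (qden α m * fseq α m) ≤ 1 := by
  have hf := (fseq_pos hirr h0 m).le
  have hf' := (fseq_pos hirr h0 (m + 1)).le
  have hq : (pq α (m + 1) : ℝ) * qden α m ≤ qden α (m + 1) := mod_cast pq_mul_qden_le α m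
  calc pq α (m + 1) * (qden α m * fseq α m)
      ≤ qden α (m + 1) * fseq α m := by rw [← mul_assoc]; gcongr
    _ ≤ qden α (m + 1) * fseq α m + qden α m * fseq α (m + 1) := by
        linarith [mul_nonneg (Nat.cast_nonneg (α := ℝ) (qden α m)) hf']
    _ = 1 := qden_succ_mul_fseq_add α m

theorem one_le_pq_add_two_mul_qden_mul_fseq (hirr : Irrational α) (h0 : 0 < α) (h1 : α < 1)
    (m : ℕ) : 1 ≤ (pq α (m + 1) + 2) * (qden α m * fseq α m) := by
  have hf := (fseq_pos hirr h0 m).le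
  have hq : (qden α (m + 1) : ℝ) ≤ (pq α (m + 1) + 1) * qden α m :=
    mod_cast qden_succ_le hirr h0 h1 m
  calc (1 : ℝ) = qden α (m + 1) * fseq α m + qden α m * fseq α (m + 1) :=
        (qden_succ_mul_fseq_add α m).symm
    _ ≤ (pq α (m + 1) + 1) * qden α m * fseq α m + qden α m * fseq α m := by
        have := fseq_succ_le hirr h0 m
        gcongr
    _ = _ := by ring

/-- The partial sum `a₁ + ⋯ + a_k` of the partial quotients of `α`, the normalization of the
discrepancy. -/
def pqSum (α : ℝ) (k : ℕ) : ℝ := ∑ m ∈ Icc 1 k, (pq α m : ℝ)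

theorem pqSum_succ (α : ℝ) (k : ℕ) : pqSum α (k + 1) = pqSum α k + pq α (k + 1) :=
  sum_Icc_succ_top (Nat.le_add_left 1 k) _

theorem monotone_pqSum (α : ℝ) : Monotone (pqSum α) :=
  monotone_nat_of_le_succ fun k => by
    rw [pqSum_succ]
    exact le_add_of_nonneg_right (Nat.cast_nonneg _)

theorem pqSum_nonneg (α : ℝ) (k : ℕ) : 0 ≤ pqSum α k := sum_nonneg fun _ _ => Nat.cast_nonneg _

theorem natCast_le_pqSum (hirr : Irrational α) (h0 : 0 < α) (h1 : α < 1) (k : ℕ) :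
    (k : ℝ) ≤ pqSum α k := by
  induction k with
  | zero => simpa using pqSum_nonneg α 0
  | succ k ih =>
    rw [pqSum_succ, Nat.cast_succ]
    exact add_le_add ih (mod_cast one_le_pq hirr h0 h1 k)

theorem pqSum_succ_pos (hirr : Irrational α) (h0 : 0 < α) (h1 : α < 1) (k : ℕ) :
    0 < pqSum α (k + 1) :=
  (Nat.cast_pos.2 k.succ_pos).trans_le (natCast_le_pqSum hirr h0 h1 (k + 1))

end ContinuedFraction

/-! ### Sums along Ostrowski blocks -/

section Block

variable {α : ℝ}

theorem exists_sawtoothSum_eq_neg_one_pow_mul (α : ℝ) (m n : ℕ) (y : ℝ) :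
    ∃ z, sawtoothSum α n y = sawtoothSum ((-1) ^ m * α) n z := by
  rcases neg_one_pow_eq_or ℝ m with h | h
  · exact ⟨y, by rw [h, one_mul]⟩
  · exact ⟨_, by rw [h, neg_one_mul]; exact sawtoothSum_reflect α n y⟩

theorem abs_sawtoothSum_mul_qden_le (hirr : Irrational α) (h0 : 0 < α) (h1 : α < 1) {m c : ℕ}
    (hc : c ≤ pq α (m + 1)) (y : ℝ) :
    |sawtoothSum α (c * qden α m) y| ≤ pq α (m + 1) / 8 + 9 / 2 := by
  obtain ⟨z, hz⟩ := exists_sawtoothSum_eq_neg_one_pow_mul α m (c * qden α m) y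
  set θ : ℝ := qden α m * fseq α m
  have hq := qden_pos hirr h0 h1 m
  have hθpos : 0 < θ := mul_pos (Nat.cast_pos.2 hq) (fseq_pos hirr h0 m)
  have hθle : pq α (m + 1) * θ ≤ 1 := pq_mul_qden_mul_fseq_le_one hirr h0 m
  have hcθ : c * θ ≤ 1 := le_trans (by gcongr) hθle
  have hθone : θ ≤ 1 :=
    le_trans (le_mul_of_one_le_left hθpos.le (mod_cast one_le_pq hirr h0 h1 m)) hθle
  have hinv : 1 / (8 * θ) ≤ (pq α (m + 1) + 2) / 8 := by
    rw [div_le_div_iff₀ (by positivity) (by norm_num)]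
    linarith [one_le_pq_add_two_mul_qden_mul_fseq hirr h0 h1 m]
  have hblock := abs_sawtoothSum_mul_le hq (isCoprime_pnum_qden α m)
    (by rw [qden_mul_neg_one_pow_mul_sub]) hθpos hθone c z
  rw [hz]
  linarith

theorem abs_sawtoothSum_sum_mul_qden_le (hirr : Irrational α) (h0 : 0 < α) (h1 : α < 1)
    {c : ℕ → ℕ} (hc : ∀ h, c h ≤ pq α (h + 1)) (N : ℕ) (y : ℝ) :
    |sawtoothSum α (∑ h ∈ range N, c h * qden α h) y| ≤ pqSum α N / 8 + 9 / 2 * N := by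
  induction N generalizing y with
  | zero => simp [sawtoothSum, pqSum]
  | succ N ih =>
    rw [sum_range_succ, sawtoothSum_add, pqSum_succ, Nat.cast_succ]
    refine (abs_add_le _ _).trans ?_
    linarith [ih y, abs_sawtoothSum_mul_qden_le hirr h0 h1 (hc N)
      (y + (∑ h ∈ range N, c h * qden α h : ℕ) * α)]

theorem sawtoothSum_half_mul_qden_le (hirr : Irrational α) (h0 : 0 < α) (h1 : α < 1) (m : ℕ)
    {y : ℝ} (hy0 : 0 ≤ y) (hy : y ≤ fseq α m) :
    sawtoothSum ((-1) ^ m * α) ((pq α (m + 1) + 1) / 2 * qden α m) y ≤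
      -pq α (m + 1) / 8 + 3 := by
  have hq := qden_pos hirr h0 h1 m
  have hpq := one_le_pq hirr h0 h1 m
  set c := (pq α (m + 1) + 1) / 2
  set θ : ℝ := qden α m * fseq α m
  have hθ : 0 ≤ θ := mul_nonneg (Nat.cast_nonneg _) (fseq_pos hirr h0 m).le
  have hac : (pq α (m + 1) : ℝ) ≤ 2 * c := mod_cast (by omega : pq α (m + 1) ≤ 2 * c)
  have hca : 2 * (c : ℝ) ≤ pq α (m + 1) + 1 := mod_cast (by omega : 2 * c ≤ pq α (m + 1) + 1)
  have hca' : (c : ℝ) ≤ pq α (m + 1) := mod_cast (by omega : c ≤ pq α (m + 1))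
  have hθle : pq α (m + 1) * θ ≤ 1 := pq_mul_qden_mul_fseq_le_one hirr h0 m
  have hcθ : c * θ ≤ 1 := le_trans (by gcongr) hθle
  have hcy : c * (qden α m * y) ≤ c * θ := by unfold θ; gcongr
  have hquad : θ * (c * (c - 1) / 2) ≤ c / 4 := by
    have h : (2 * (c : ℝ) - 2) * θ ≤ 1 := by nlinarith
    nlinarith [mul_le_mul_of_nonneg_left h (Nat.cast_nonneg (α := ℝ) c)]
  have hblock := sawtoothSum_mul_le_of_nonneg hq (isCoprime_pnum_qden α m)
    (by rw [qden_mul_neg_one_pow_mul_sub]) hθ c hy0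
  linarith

theorem sawtoothSum_mul_qden_add (α : ℝ) (m c n : ℕ) (y : ℝ) :
    sawtoothSum ((-1) ^ m * α) (c * qden α m + n) y =
      sawtoothSum ((-1) ^ m * α) (c * qden α m) y +
        sawtoothSum ((-1) ^ m * α) n (y + c * fseq α m) := by
  rw [sawtoothSum_add, ← sawtoothSum_add_intCast _ n (y + c * fseq α m)
    (c * ((-1) ^ m * pnum α m)), ← qden_mul_neg_one_pow_mul_sub]
  congr 2
  push_cast
  ring

end Block

/-! ### Discrepancy and sawtooth sums -/

section Discrepancy

variable {α : ℝ}

theorem ddisc_eq_sawtoothSum_sub (α : ℝ) {β : ℝ} (hβ0 : 0 ≤ β) (hβ1 : β ≤ 1) (n : ℕ) :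
    ddisc α β n = sawtoothSum α n (-β) - sawtoothSum α n 0 := by
  calc ddisc α β n
      = ∑ r ∈ range n, ((if Int.fract (r * α) < β then (1 : ℝ) else 0) - β) := by
        rw [ddisc, sum_sub_distrib, sum_const, card_range, nsmul_eq_mul, mul_comm β]
    _ = ∑ r ∈ range n, (sawtooth (r * α + -β) - sawtooth (r * α + 0)) :=
        sum_congr rfl fun r _ => by
          rw [indicator_fract_lt_sub_eq hβ0 hβ1, ← sub_eq_add_neg, add_zero]
    _ = _ := sum_sub_distrib _ _

theorem abs_ddisc_le {n : ℕ} {B : ℝ} (hB : ∀ y, |sawtoothSum α n y| ≤ B) {β : ℝ}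
    (hβ : β ∈ Set.Ioo (0 : ℝ) 1) : |ddisc α β n| ≤ 2 * B := by
  rw [ddisc_eq_sawtoothSum_sub α hβ.1.le hβ.2.le, two_mul]
  exact (abs_sub _ _).trans (add_le_add (hB _) (hB _))

theorem bddAbove_image_abs_ddisc (α : ℝ) (n : ℕ) :
    BddAbove ((fun β => |ddisc α β n|) '' Set.Ioo (0 : ℝ) 1) :=
  ⟨_, Set.forall_mem_image.2 fun _ hβ => abs_ddisc_le (abs_sawtoothSum_le α n) hβ⟩

theorem nDsup_nonneg (α : ℝ) (n : ℕ) : 0 ≤ nDsup α n :=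
  Real.sSup_nonneg (Set.forall_mem_image.2 fun _ _ => abs_nonneg _)

theorem nDsup_le {n : ℕ} {B : ℝ} (hB : ∀ y, |sawtoothSum α n y| ≤ B) : nDsup α n ≤ 2 * B :=
  csSup_le ((Set.nonempty_Ioo.2 one_pos).image _)
    (Set.forall_mem_image.2 fun _ hβ => abs_ddisc_le hB hβ)

theorem two_mul_abs_sawtoothSum_sub_one_le_nDsup (hirr : Irrational α) {n : ℕ} (hn : n ≠ 0) :
    2 * |sawtoothSum α n 0| - 1 ≤ nDsup α n := by
  set β := Int.fract (n * α) with hβ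
  have hβ0 : 0 < β := Int.fract_pos.2 ((hirr.natCast_mul hn).ne_int _)
  have hβ1 : β < 1 := Int.fract_lt_one _
  have hperiod : sawtoothSum α n (-β) = sawtoothSum α n (-(n * α)) := by
    rw [← sawtoothSum_add_intCast α n (-(n * α)) ⌊n * α⌋, hβ, ← Int.self_sub_floor]
    congr 1
    ring
  have hsum : ddisc α β n = -(2 * sawtoothSum α n 0 + β) := by
    rw [ddisc_eq_sawtoothSum_sub α hβ0.le hβ1.le, hperiod]
    linear_combination sawtoothSum_neg_mul_add hirr n
  calc 2 * |sawtoothSum α n 0| - 1 ≤ |2 * sawtoothSum α n 0| - |-β| := by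
        rw [abs_mul, abs_two, abs_neg, abs_of_pos hβ0]
        linarith
    _ ≤ |2 * sawtoothSum α n 0 - -β| := abs_sub_abs_le_abs_sub _ _
    _ = |ddisc α β n| := by rw [hsum, abs_neg, sub_neg_eq_add]
    _ ≤ nDsup α n := le_csSup (bddAbove_image_abs_ddisc α n) ⟨β, ⟨hβ0, hβ1⟩, rfl⟩

end Discrepancy

/-! ### Ostrowski digits -/

section Ostrowski

variable {α : ℝ} {N : ℕ} {c : ℕ → ℕ}

/-- `c` satisfies the digit conditions of an Ostrowski expansion and vanishes from index `N` on.
Unlike in `IsOstrowski`, the leading digit may be zero, so that expansions can be built digit by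
digit. -/
structure IsOstrowskiDigits (α : ℝ) (N : ℕ) (c : ℕ → ℕ) : Prop where
  le_pq : ∀ h, c h ≤ pq α (h + 1)
  eq_zero_of_succ_eq_pq : ∀ h, c (h + 1) = pq α (h + 2) → c h = 0
  eq_zero_of_le : ∀ h, N ≤ h → c h = 0

namespace IsOstrowskiDigits

protected theorem zero (α : ℝ) : IsOstrowskiDigits α 0 0 :=
  ⟨fun _ => Nat.zero_le _, fun _ _ => rfl, fun _ _ => rfl⟩

theorem succ (hc : IsOstrowskiDigits α N c) : IsOstrowskiDigits α (N + 1) c :=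
  { hc with eq_zero_of_le := fun h hh => hc.eq_zero_of_le h (Nat.le_of_succ_le hh) }

theorem of_succ (hc : IsOstrowskiDigits α (N + 1) c) (hN : c N = 0) : IsOstrowskiDigits α N c where
  __ := hc
  eq_zero_of_le h hh := by
    obtain rfl | hlt := hh.eq_or_lt
    exacts [hN, hc.eq_zero_of_le h hlt]

theorem update (hirr : Irrational α) (h0 : 0 < α) (h1 : α < 1) (hc : IsOstrowskiDigits α N c)
    {d : ℕ} (hd : d ≤ pq α (N + 1)) (hcd : d = pq α (N + 1) → ∀ h, h + 1 = N → c h = 0) :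
    IsOstrowskiDigits α (N + 1) (Function.update c N d) where
  le_pq h := by
    rcases eq_or_ne h N with rfl | hh
    · rwa [Function.update_self]
    · rw [Function.update_of_ne hh]
      exact hc.le_pq h
  eq_zero_of_succ_eq_pq h hh := by
    rcases lt_trichotomy (h + 1) N with hlt | heq | hgt
    · rw [Function.update_of_ne hlt.ne] at hh
      rw [Function.update_of_ne (by omega)]
      exact hc.eq_zero_of_succ_eq_pq h hh
    · subst heq
      rw [Function.update_self] at hh
      rw [Function.update_of_ne (by omega)]
      exact hcd hh h rfl
    · rw [Function.update_of_ne hgt.ne', hc.eq_zero_of_le _ hgt.le] at hh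
      have hpq : 1 ≤ pq α (h + 2) := one_le_pq hirr h0 h1 (h + 1)
      omega
  eq_zero_of_le h hh := by
    rw [Function.update_of_ne (by omega)]
    exact hc.eq_zero_of_le h (Nat.le_of_succ_le hh)

theorem exists_isOstrowski (hc : IsOstrowskiDigits α N c)
    (hsum : ∑ h ∈ range N, c h * qden α h ≠ 0) :
    ∃ K < N, IsOstrowski α (∑ h ∈ range N, c h * qden α h) K c := by
  induction N with
  | zero => exact absurd (sum_range_zero _) hsum
  | succ N ih =>
    by_cases hN : c N = 0
    · rw [sum_range_succ, hN, zero_mul, add_zero] at hsum ⊢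
      obtain ⟨K, hK, hKc⟩ := ih (hc.of_succ hN) hsum
      exact ⟨K, hK.trans N.lt_succ_self, hKc⟩
    · exact ⟨N, N.lt_succ_self, rfl, hc.le_pq, hc.eq_zero_of_succ_eq_pq, Nat.pos_of_ne_zero hN,
        hc.eq_zero_of_le⟩

theorem ordOst_sum_lt (hc : IsOstrowskiDigits α N c)
    (hsum : ∑ h ∈ range N, c h * qden α h ≠ 0) :
    ordOst α (∑ h ∈ range N, c h * qden α h) < N := by
  obtain ⟨K, hK, hKc⟩ := hc.exists_isOstrowski hsum
  have hle : ordOst α (∑ h ∈ range N, c h * qden α h) ≤ K := Nat.sInf_le ⟨c, hKc⟩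
  exact hle.trans_lt hK

end IsOstrowskiDigits

theorem sum_range_succ_update_mul (c q : ℕ → ℕ) (N d : ℕ) :
    ∑ h ∈ range (N + 1), Function.update c N d h * q h = ∑ h ∈ range N, c h * q h + d * q N := by
  rw [sum_range_succ, Function.update_self]
  congr 1
  exact sum_congr rfl fun h hh => by rw [Function.update_of_ne (mem_range.1 hh).ne]

theorem exists_isOstrowskiDigits (hirr : Irrational α) (h0 : 0 < α) (h1 : α < 1) {r : ℕ}
    (hr : r < qden α N) :
    ∃ c, IsOstrowskiDigits α N c ∧ ∑ h ∈ range N, c h * qden α h = r := by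
  induction N using Nat.twoStepInduction generalizing r with
  | zero => exact ⟨0, .zero α, (Nat.lt_one_iff.1 hr).symm⟩
  | one =>
    refine ⟨_, (IsOstrowskiDigits.zero α).update (d := r) hirr h0 h1 hr.le
      fun h => absurd h hr.ne, ?_⟩
    simp [qden]
  | more N ihN ihN' =>
    have hq := qden_pos hirr h0 h1 (N + 1)
    set d := r / qden α (N + 1)
    have hdiv : r % qden α (N + 1) + d * qden α (N + 1) = r := Nat.mod_add_div' _ _
    rw [qden] at hr
    have hd : d ≤ pq α (N + 2) := by
      rw [← Nat.lt_succ_iff, Nat.div_lt_iff_lt_mul hq, Nat.succ_mul]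
      exact hr.trans_le (Nat.add_le_add_left (qden_le_succ hirr h0 h1 N) _)
    rcases hd.eq_or_lt with htop | hlt
    · obtain ⟨c, hc, hsum⟩ := @ihN (r % qden α (N + 1)) (by rw [htop] at hdiv; omega)
      refine ⟨_, hc.succ.update hirr h0 h1 hd fun _ h hh => ?_, ?_⟩
      · exact hc.eq_zero_of_le h (Nat.succ_injective hh).ge
      · rw [sum_range_succ_update_mul, sum_range_succ, hc.eq_zero_of_le N le_rfl, hsum, zero_mul,
          add_zero, hdiv]
    · obtain ⟨c, hc, hsum⟩ := ihN' (Nat.mod_lt r hq)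
      refine ⟨_, hc.update hirr h0 h1 hd fun h => absurd h hlt.ne, ?_⟩
      rw [sum_range_succ_update_mul, hsum, hdiv]

theorem exists_isOstrowski_ordOst (hirr : Irrational α) (h0 : 0 < α) (h1 : α < 1) {r : ℕ}
    (hr : r ≠ 0) : ∃ c, IsOstrowski α r (ordOst α r) c := by
  obtain ⟨N, hN⟩ : ∃ N, r < qden α N := ⟨r + 1, le_qden hirr h0 h1 (r + 1)⟩
  obtain ⟨c, hc, rfl⟩ := exists_isOstrowskiDigits hirr h0 h1 hN
  obtain ⟨K, -, hK⟩ := hc.exists_isOstrowski hr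
  exact Nat.sInf_mem (s := {N | ∃ c, IsOstrowski α _ N c}) ⟨K, c, hK⟩

theorem tendsto_ordOst (hirr : Irrational α) (h0 : 0 < α) (h1 : α < 1) :
    Tendsto (ordOst α) atTop atTop := by
  refine tendsto_atTop.2 fun K => ?_
  filter_upwards [eventually_gt_atTop (∑ h ∈ range K, pq α (h + 1) * qden α h)] with r hr
  obtain ⟨c, hsum, hle, -⟩ := exists_isOstrowski_ordOst hirr h0 h1 (Nat.ne_zero_of_lt hr)
  by_contra! hK
  refine hr.not_ge ?_
  calc r = ∑ h ∈ range (ordOst α r + 1), c h * qden α h := hsum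
    _ ≤ ∑ h ∈ range (ordOst α r + 1), pq α (h + 1) * qden α h :=
        sum_le_sum fun h _ => Nat.mul_le_mul_right _ (hle h)
    _ ≤ ∑ h ∈ range K, pq α (h + 1) * qden α h := sum_le_sum_of_subset (range_mono hK)

theorem nDsup_succ_le (hirr : Irrational α) (h0 : 0 < α) (h1 : α < 1) {r : ℕ} (hr : r ≠ 0) :
    nDsup α (r + 1) ≤ pqSum α (ordOst α r + 1) / 4 + 10 * (ordOst α r + 1 : ℕ) := by
  obtain ⟨c, hsum, hle, -⟩ := exists_isOstrowski_ordOst hirr h0 h1 hr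
  set N := ordOst α r + 1 with hN
  have hN1 : (1 : ℝ) ≤ N := by rw [hN, Nat.cast_succ]; linarith [(ordOst α r).cast_nonneg (α := ℝ)]
  have hB (y : ℝ) : |sawtoothSum α (r + 1) y| ≤ pqSum α N / 8 + 9 / 2 * N + 1 / 2 := by
    rw [sawtoothSum_succ]
    refine (abs_add_le _ _).trans (add_le_add ?_ (abs_sawtooth_le _))
    rw [hsum]
    exact abs_sawtoothSum_sum_mul_qden_le hirr h0 h1 hle N y
  linarith [nDsup_le hB]

end Ostrowski

/-! ### Half blocks of one parity -/

section HalfDigit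

variable {α : ℝ} {e : ℕ}

/-- The sum of the partial quotients `a_m` over the indices `1 ≤ m ≤ k` with `m % 2 = e`, the
main term of the lower bound for the discrepancy. -/
def pqParitySum (α : ℝ) (e k : ℕ) : ℝ := ∑ m ∈ (Icc 1 k).filter (fun m => m % 2 = e), (pq α m : ℝ)

/-- The Ostrowski digit at position `h` whose block makes the sawtooth sum most negative: half of
`a_{h + 1}` if `h + 1` has parity `e`, and `0` otherwise. The half is rounded up so that the digit
is not zero when `a_{h + 1} = 1`. -/
def halfDigit (α : ℝ) (e h : ℕ) : ℕ := if (h + 1) % 2 = e then (pq α (h + 1) + 1) / 2 else 0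

/-- The integer whose Ostrowski digits are the first `k` half digits of parity `e`, at which the
discrepancy is shown to be large. -/
def halfDigitSum (α : ℝ) (e k : ℕ) : ℕ := ∑ h ∈ range k, halfDigit α e h * qden α h

theorem pqParitySum_nonneg (α : ℝ) (e k : ℕ) : 0 ≤ pqParitySum α e k :=
  sum_nonneg fun _ _ => Nat.cast_nonneg _

theorem pqParitySum_succ (α : ℝ) (e k : ℕ) :
    pqParitySum α e (k + 1) =
      pqParitySum α e k + if (k + 1) % 2 = e then (pq α (k + 1) : ℝ) else 0 := by
  rw [pqParitySum, sum_filter, sum_Icc_succ_top (Nat.le_add_left 1 k), ← sum_filter, ← pqParitySum]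

theorem halfDigitSum_succ (α : ℝ) (e k : ℕ) :
    halfDigitSum α e (k + 1) = halfDigit α e k * qden α k + halfDigitSum α e k := by
  rw [halfDigitSum, sum_range_succ, ← halfDigitSum, add_comm]

theorem isOstrowskiDigits_halfDigit (hirr : Irrational α) (h0 : 0 < α) (h1 : α < 1) (e k : ℕ) :
    IsOstrowskiDigits α k (fun h => if h < k then halfDigit α e h else 0) where
  le_pq h := by
    have hpq := one_le_pq hirr h0 h1 h
    unfold halfDigit
    split_ifs <;> omega
  eq_zero_of_succ_eq_pq h hh := by
    have hpq : 1 ≤ pq α (h + 2) := one_le_pq hirr h0 h1 (h + 1)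
    unfold halfDigit at hh ⊢
    split_ifs at hh ⊢ <;> omega
  eq_zero_of_le h hh := if_neg hh.not_gt

theorem ordOst_halfDigitSum_lt (hirr : Irrational α) (h0 : 0 < α) (h1 : α < 1) {k : ℕ}
    (hk : halfDigitSum α e k ≠ 0) : ordOst α (halfDigitSum α e k) < k := by
  have hsum : ∑ h ∈ range k, (if h < k then halfDigit α e h else 0) * qden α h =
      halfDigitSum α e k :=
    sum_congr rfl fun h hh => by rw [if_pos (mem_range.1 hh)]
  rw [← hsum] at hk ⊢
  exact (isOstrowskiDigits_halfDigit hirr h0 h1 e k).ordOst_sum_lt hk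

theorem le_halfDigitSum_add_two (hirr : Irrational α) (h0 : 0 < α) (h1 : α < 1) (he : e < 2)
    (k : ℕ) : k ≤ halfDigitSum α e (k + 2) := by
  obtain ⟨h, hh, hparity⟩ : ∃ h ∈ Set.Icc k (k + 1), (h + 1) % 2 = e := by
    rcases (by omega : (k + 1) % 2 = e ∨ (k + 2) % 2 = e) with h | h
    exacts [⟨k, ⟨le_rfl, k.le_succ⟩, h⟩, ⟨k + 1, ⟨k.le_succ, le_rfl⟩, h⟩]
  have hdigit : 0 < halfDigit α e h := by
    have hpq := one_le_pq hirr h0 h1 h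
    rw [halfDigit, if_pos hparity]
    omega
  calc k ≤ h := hh.1
    _ ≤ qden α h := le_qden hirr h0 h1 h
    _ ≤ halfDigit α e h * qden α h := Nat.le_mul_of_pos_left _ hdigit
    _ ≤ halfDigitSum α e (k + 2) :=
        single_le_sum (f := fun h => halfDigit α e h * qden α h) (fun _ _ => Nat.zero_le _)
          (mem_range.2 (Nat.lt_succ_of_le hh.2))

theorem tendsto_halfDigitSum (hirr : Irrational α) (h0 : 0 < α) (h1 : α < 1) (he : e < 2) :
    Tendsto (halfDigitSum α e) atTop atTop :=
  (tendsto_add_atTop_iff_nat 2).1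
    (tendsto_atTop_mono (le_halfDigitSum_add_two hirr h0 h1 he) tendsto_id)

-- The sum is split off from the top digit down. Digits of the other parity vanish, so all shifts
-- `c f_h` are nonnegative, and the recursion for `f_h` keeps every block starting in `[0, f_h]`.
theorem sawtoothSum_halfDigitSum_le (hirr : Irrational α) (h0 : 0 < α) (h1 : α < 1) (k : ℕ)
    {y : ℝ} (hy0 : 0 ≤ y) (hy : ∀ h < k, (h + 1) % 2 = e → y ≤ fseq α (h + 1)) :
    sawtoothSum ((-1) ^ (e + 1) * α) (halfDigitSum α e k) y ≤ -pqParitySum α e k / 8 + 3 * k := by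
  induction k generalizing y with
  | zero => simp [halfDigitSum, sawtoothSum, pqParitySum]
  | succ k ih =>
    rw [halfDigitSum_succ, pqParitySum_succ, halfDigit, Nat.cast_succ]
    split_ifs with hparity
    swap
    · rw [zero_mul, zero_add]
      linarith [ih hy0 fun h hh => hy h (hh.trans k.lt_succ_self)]
    have hyk : y ≤ fseq α (k + 1) := hy k k.lt_succ_self hparity
    have hdigit : (pq α (k + 1) + 1) / 2 ≤ pq α (k + 1) := by
      have hpq := one_le_pq hirr h0 h1 k
      omega
    have hrest := ih (y := y + ((pq α (k + 1) + 1) / 2 : ℕ) * fseq α k)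
      (add_nonneg hy0 (mul_nonneg (Nat.cast_nonneg _) (fseq_pos hirr h0 k).le)) fun h hh hh' => by
        obtain ⟨m, rfl⟩ : ∃ m, k = m + 1 := ⟨k - 1, by omega⟩
        exact (add_mul_fseq_succ_le hirr h0 hdigit hyk).trans
          (antitone_fseq hirr h0 (by omega))
    have hsign : (-1 : ℝ) ^ (e + 1) = (-1) ^ k :=
      neg_one_pow_congr (by rw [Nat.even_iff, Nat.even_iff]; omega)
    rw [hsign] at hrest ⊢
    rw [sawtoothSum_mul_qden_add]
    linarith [sawtoothSum_half_mul_qden_le hirr h0 h1 k hy0 (hyk.trans (fseq_succ_le hirr h0 k))]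

theorem pqParitySum_div_four_sub_le_nDsup (hirr : Irrational α) (h0 : 0 < α) (h1 : α < 1)
    (e k : ℕ) :
    pqParitySum α e k / 4 - (6 * k + 4) ≤ nDsup α (halfDigitSum α e k + 1) := by
  set n := halfDigitSum α e k
  have hneg : |sawtoothSum ((-1) ^ (e + 1) * α) n 0| ≤ |sawtoothSum α n 0| + 1 := by
    rcases neg_one_pow_eq_or ℝ (e + 1) with h | h <;> rw [h]
    · rw [one_mul]
      exact le_add_of_nonneg_right one_pos.le
    · rw [neg_one_mul]
      exact abs_sawtoothSum_neg_zero_le hirr n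
  have hhalf : sawtoothSum ((-1) ^ (e + 1) * α) n 0 ≤ -pqParitySum α e k / 8 + 3 * k :=
    sawtoothSum_halfDigitSum_le hirr h0 h1 k le_rfl fun h _ _ => (fseq_pos hirr h0 (h + 1)).le
  have hlast : |sawtoothSum α n 0| - 1 / 2 ≤ |sawtoothSum α (n + 1) 0| := by
    rw [sawtoothSum_succ]
    linarith [abs_sub_abs_le_abs_add (sawtoothSum α n 0) (sawtooth (0 + n * α)),
      abs_sawtooth_le (0 + n * α)]
  linarith [neg_le_abs (sawtoothSum ((-1) ^ (e + 1) * α) n 0),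
    two_mul_abs_sawtoothSum_sub_one_le_nDsup hirr n.succ_ne_zero]

end HalfDigit

/-! ### Asymptotics -/

section Limsup

variable {α : ℝ} {e : ℕ}

theorem natCast_div_pqSum_le_one (hirr : Irrational α) (h0 : 0 < α) (h1 : α < 1) (k : ℕ) :
    k / pqSum α k ≤ 1 :=
  div_le_one_of_le₀ (natCast_le_pqSum hirr h0 h1 k) (pqSum_nonneg α k)

theorem nDsup_div_pqSum_nonneg (α : ℝ) (n : ℕ) :
    0 ≤ nDsup α n / pqSum α (ordOst α (n - 1) + 1) :=
  div_nonneg (nDsup_nonneg α n) (pqSum_nonneg α _)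

theorem eventually_nDsup_div_pqSum_le (hirr : Irrational α) (h0 : 0 < α) (h1 : α < 1) {x : ℝ}
    (hx : ∀ᶠ k : ℕ in atTop, k / pqSum α k ≤ x) :
    ∀ᶠ n in atTop, nDsup α n / pqSum α (ordOst α (n - 1) + 1) ≤ 1 / 4 + 10 * x := by
  have hord : Tendsto (fun n => ordOst α (n - 1) + 1) atTop atTop :=
    (tendsto_add_atTop_nat 1).comp ((tendsto_ordOst hirr h0 h1).comp (tendsto_sub_atTop_nat 1))
  filter_upwards [hord.eventually hx, eventually_gt_atTop 1] with n hn hn1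
  have hpos := pqSum_succ_pos hirr h0 h1 (ordOst α (n - 1))
  have hup := nDsup_succ_le hirr h0 h1 (Nat.sub_ne_zero_of_lt hn1)
  rw [Nat.sub_add_cancel hn1.le] at hup
  rw [div_le_iff₀ hpos] at hn ⊢
  linarith

theorem isBoundedUnder_nDsup_div_pqSum (hirr : Irrational α) (h0 : 0 < α) (h1 : α < 1) :
    IsBoundedUnder (· ≤ ·) atTop fun n => nDsup α n / pqSum α (ordOst α (n - 1) + 1) :=
  ⟨_, eventually_map.2 <| eventually_nDsup_div_pqSum_le hirr h0 h1 <|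
    .of_forall (natCast_div_pqSum_le_one hirr h0 h1)⟩

theorem eventually_natCast_div_pqSum_lt (hirr : Irrational α) (h0 : 0 < α) (h1 : α < 1) {x : ℝ}
    (hx : limsup (fun k : ℕ => k / pqSum α k) atTop < x) :
    ∀ᶠ k : ℕ in atTop, k / pqSum α k < x :=
  eventually_lt_of_limsup_lt hx (isBoundedUnder_of ⟨1, natCast_div_pqSum_le_one hirr h0 h1⟩)

theorem limsup_nDsup_div_pqSum_le (hirr : Irrational α) (h0 : 0 < α) (h1 : α < 1) :
    limsup (fun n => nDsup α n / pqSum α (ordOst α (n - 1) + 1)) atTop ≤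
      1 / 4 + 10 * limsup (fun k : ℕ => k / pqSum α k) atTop := by
  refine le_of_forall_pos_le_add fun ε hε => ?_
  have hlt := eventually_natCast_div_pqSum_lt hirr h0 h1
    (lt_add_of_pos_right _ (by positivity : 0 < ε / 10))
  have hbdd := isBoundedUnder_of (f := atTop) (r := (· ≥ ·)) ⟨0, nDsup_div_pqSum_nonneg α⟩
  refine (limsup_le_of_le hbdd.isCoboundedUnder_le
    (eventually_nDsup_div_pqSum_le hirr h0 h1 (hlt.mono fun _ => le_of_lt))).trans ?_
  linarith

theorem sub_le_nDsup_halfDigitSum_succ_div (hirr : Irrational α) (h0 : 0 < α) (h1 : α < 1) {k : ℕ}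
    (hk : k ≠ 0) (hn : halfDigitSum α e k ≠ 0) :
    1 / 4 * (pqParitySum α e k / pqSum α k) - 10 * (k / pqSum α k) ≤
      nDsup α (halfDigitSum α e k + 1) / pqSum α (ordOst α (halfDigitSum α e k) + 1) := by
  have hk1 : (1 : ℝ) ≤ k := mod_cast Nat.one_le_iff_ne_zero.2 hk
  calc 1 / 4 * (pqParitySum α e k / pqSum α k) - 10 * (k / pqSum α k)
      = (pqParitySum α e k / 4 - 10 * k) / pqSum α k := by ring
    _ ≤ nDsup α (halfDigitSum α e k + 1) / pqSum α k := by
        have := pqSum_nonneg α k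
        gcongr
        linarith [pqParitySum_div_four_sub_le_nDsup hirr h0 h1 e k]
    _ ≤ _ := div_le_div_of_nonneg_left (nDsup_nonneg α _) (pqSum_succ_pos hirr h0 h1 _)
        (monotone_pqSum α (ordOst_halfDigitSum_lt hirr h0 h1 hn))

theorem liminf_pqParitySum_sub_le_limsup (hirr : Irrational α) (h0 : 0 < α) (h1 : α < 1)
    (he : e < 2) :
    1 / 4 * liminf (fun k => pqParitySum α e k / pqSum α k) atTop -
        10 * limsup (fun k : ℕ => k / pqSum α k) atTop ≤
      limsup (fun n => nDsup α n / pqSum α (ordOst α (n - 1) + 1)) atTop := by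
  refine le_of_forall_pos_sub_le fun ε hε => ?_
  have hn := tendsto_halfDigitSum hirr h0 h1 he
  have hparity := eventually_lt_of_lt_liminf (f := atTop) (sub_lt_self _ hε)
    (isBoundedUnder_of (r := (· ≥ ·))
      ⟨0, fun k => div_nonneg (pqParitySum_nonneg α e k) (pqSum_nonneg α k)⟩)
  have hsmall := eventually_natCast_div_pqSum_lt hirr h0 h1
    (lt_add_of_pos_right _ (by positivity : 0 < ε / 20))
  refine le_limsup_of_frequently_le (Tendsto.frequently (tendsto_add_atTop_nat 1 |>.comp hn)
    (Eventually.frequently ?_)) (isBoundedUnder_nDsup_div_pqSum hirr h0 h1)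
  filter_upwards [hparity, hsmall, eventually_ne_atTop 0, hn.eventually_ne_atTop 0]
    with k hkparity hksmall hk0 hn0
  rw [Function.comp_apply, Nat.add_sub_cancel]
  linarith [sub_le_nDsup_halfDigitSum_succ_div hirr h0 h1 hk0 hn0]

end Limsup

theorem discrepancy_limsup_general {α : ℝ} (hirr : Irrational α) (h0 : 0 < α) (h1 : α < 1) :
    1 / 4 * max (liminf (fun k => pqParitySum α 0 k / pqSum α k) atTop)
          (liminf (fun k => pqParitySum α 1 k / pqSum α k) atTop) -
        10 * limsup (fun k : ℕ => k / pqSum α k) atTop ≤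
      limsup (fun n => nDsup α n / pqSum α (ordOst α (n - 1) + 1)) atTop ∧
    limsup (fun n => nDsup α n / pqSum α (ordOst α (n - 1) + 1)) atTop ≤
      1 / 4 + 10 * limsup (fun k : ℕ => k / pqSum α k) atTop := by
  refine ⟨?_, limsup_nDsup_div_pqSum_le hirr h0 h1⟩
  rw [mul_max_of_nonneg _ _ (by norm_num), sub_le_iff_le_add]
  exact max_le
    (sub_le_iff_le_add.1 (liminf_pqParitySum_sub_le_limsup hirr h0 h1 two_pos))
    (sub_le_iff_le_add.1 (liminf_pqParitySum_sub_le_limsup hirr h0 h1 one_lt_two))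

/-- if the partial quotients are unbounded, `ℓ_e² + ℓ_o² > 0` and
`limsup k / ∑_{m=1}^k a_m = 0`, then
`(1/4) max{ℓ_e, ℓ_o} ≤ limsup_n n D_n^*(α) / ∑_{m=1}^{ord(n-1)+1} a_m ≤ 1/4`. -/
theorem discrepancy_limsup (α : ℝ) (hirr : Irrational α) (h0 : 0 < α) (h1 : α < 1)
    (hub : ∀ B : ℕ, ∃ k, 1 ≤ k ∧ B < pq α k)
    (ℓe ℓo : ℝ)
    (hℓe : ℓe = Filter.liminf (fun k : ℕ =>
      (∑ m ∈ (Finset.Icc 1 k).filter (fun m => Even m), (pq α m : ℝ)) /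
        ∑ m ∈ Finset.Icc 1 k, (pq α m : ℝ)) Filter.atTop)
    (hℓo : ℓo = Filter.liminf (fun k : ℕ =>
      (∑ m ∈ (Finset.Icc 1 k).filter (fun m => Odd m), (pq α m : ℝ)) /
        ∑ m ∈ Finset.Icc 1 k, (pq α m : ℝ)) Filter.atTop)
    (hpos : 0 < ℓe ^ 2 + ℓo ^ 2)
    (hsmall : Filter.limsup (fun k : ℕ =>
      (k : ℝ) / ∑ m ∈ Finset.Icc 1 k, (pq α m : ℝ)) Filter.atTop = 0) :
    (1 / 4) * max ℓe ℓo ≤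
      Filter.limsup (fun n : ℕ =>
        nDsup α n / ∑ m ∈ Finset.Icc 1 (ordOst α (n - 1) + 1), (pq α m : ℝ))
        Filter.atTop ∧
    Filter.limsup (fun n : ℕ =>
        nDsup α n / ∑ m ∈ Finset.Icc 1 (ordOst α (n - 1) + 1), (pq α m : ℝ))
        Filter.atTop ≤ 1 / 4 := by
  simpa only [hℓe, hℓo, pqSum, pqParitySum, ← Nat.even_iff, ← Nat.odd_iff, hsmall, mul_zero,
    sub_zero, add_zero] using discrepancy_limsup_general hirr h0 h1
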